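/- Let G be a finite simple graph, let n be even, and let A = {a_1,…,a_n} be distinct vertices such that G is noncrossing with respect to the cyclic sequence (a_1,…,a_n). Let H = G−A, and for 1 ≤ i < j ≤ n let H_{ij} be the induced subgraph of G on V(H) ∪ {a_i,a_j}. If H has exactly one perfect matching, then M(G) = Σ_F (−1)^{χ(F)} Π_{{i,j}∈F, i<j} M(H_{ij}), the sum over all partitions F of {1,…,n} into pairs (i.e., M(G) equals the Pfaffian Pf(M(H_{ij}))_{1≤i<j≤n}). -/

import Mathlib

/-- A perfect matching of the induced subgraph of `G` on the vertex set `s`,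
represented as a set `m` of edges of `G`: every edge of `m` is an edge of `G`
with both endpoints in `s`, and every vertex of `s` lies in exactly one edge of `m`. -/
def IsPMOn {α : Type*} (G : SimpleGraph α) (s : Finset α) (m : Finset (Sym2 α)) : Prop :=
  (∀ e ∈ m, e ∈ G.edgeSet ∧ ∀ v ∈ e, v ∈ s) ∧ ∀ v ∈ s, ∃! e, e ∈ m ∧ v ∈ e

/-- The number of perfect matchings of the induced subgraph of `G` on `s`. -/
noncomputable def pmCount {α : Type*} (G : SimpleGraph α) (s : Finset α) : ℕ :=
  Nat.card {m : Finset (Sym2 α) // IsPMOn G s m}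

open Classical in
/-- The sum, over all perfect matchings of the induced subgraph of `G` on `s`,
of the product of the weights of the edges of the matching. -/
noncomputable def pmSum {α R : Type*} [Fintype α] [DecidableEq α] [CommRing R]
    (G : SimpleGraph α) (w : Sym2 α → R) (s : Finset α) : R :=
  ∑ m ∈ Finset.univ.filter (fun m : Finset (Sym2 α) => IsPMOn G s m), ∏ e ∈ m, w e

/-- There are two vertex-disjoint paths in `G`, one joining `x₁` to `y₁` and one joining
`x₂` to `y₂`, whose internal vertices avoid `S`. -/
def DisjointPaths {α : Type*} (G : SimpleGraph α) (S : Set α) (x₁ y₁ x₂ y₂ : α) : Prop :=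
  ∃ (p : G.Walk x₁ y₁) (q : G.Walk x₂ y₂), p.IsPath ∧ q.IsPath ∧
    (∀ u ∈ p.support, u ∉ q.support) ∧
    (∀ u ∈ p.support, u ≠ x₁ → u ≠ y₁ → u ∉ S) ∧
    (∀ u ∈ q.support, u ≠ x₂ → u ≠ y₂ → u ∉ S)

/-- `G` is noncrossing with respect to the cyclic sequence given by the list `L`:
there are no indices `i < j < k < l` such that `G` contains two vertex-disjoint paths,
one joining `L[i]` to `L[k]` and one joining `L[j]` to `L[l]`, whose internal vertices
avoid the vertices of `L`. -/
def NoncrossingList {α : Type*} (G : SimpleGraph α) (L : List α) : Prop :=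
  ∀ i j k l : Fin L.length, i < j → j < k → k < l →
    ¬ DisjointPaths G {x | x ∈ L} (L.get i) (L.get k) (L.get j) (L.get l)

/-- `U, W` form a bipartition of the vertices of `G`. -/
def IsBipartition {α : Type*} [Fintype α] [DecidableEq α]
    (G : SimpleGraph α) (U W : Finset α) : Prop :=
  Disjoint U W ∧ U ∪ W = Finset.univ ∧
    ∀ ⦃x y⦄, G.Adj x y → ((x ∈ U ∧ y ∈ W) ∨ (x ∈ W ∧ y ∈ U))

/-- `P` is an `MH`-alternating path, where `MH` is the unique perfect matching of the
induced subgraph of `G` on the vertex set `sH`: `P` is a (nontrivial) path, among any two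
consecutive edges of `P` exactly one lies in `MH`, and for each endpoint the incident edge
of `P` lies in `MH` iff the endpoint belongs to `sH`. -/
def IsAltPath {α : Type*} (G : SimpleGraph α) (sH : Finset α) (MH : Finset (Sym2 α))
    {x y : α} (P : G.Walk x y) : Prop :=
  P.IsPath ∧ P.edges ≠ [] ∧
  P.edges.Chain' (fun e f => e ∈ MH ↔ f ∉ MH) ∧
  (∀ e ∈ P.edges.head?, (e ∈ MH ↔ x ∈ sH)) ∧
  (∀ e ∈ P.edges.getLast?, (e ∈ MH ↔ y ∈ sH))

/-- A family of pairwise vertex-disjoint `MH`-alternating paths in `G` whose set of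
path-endpoints is exactly `A`, each vertex of `A` being an endpoint of exactly one
path of the family. -/
def IsAltPathNest {α : Type*} (G : SimpleGraph α) (sH : Finset α) (MH : Finset (Sym2 α))
    (A : Finset α) (F : Finset (Σ x : α, Σ y : α, G.Walk x y)) : Prop :=
  (∀ p ∈ F, IsAltPath G sH MH p.2.2) ∧
  (∀ p ∈ F, ∀ q ∈ F, p ≠ q → ∀ u ∈ p.2.2.support, u ∉ q.2.2.support) ∧
  (∀ p ∈ F, p.1 ∈ A ∧ p.2.1 ∈ A) ∧
  (∀ v ∈ A, ∃! p, p ∈ F ∧ (v = p.1 ∨ v = p.2.1))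

/-- A 1-factor on `{1, …, n}`: a partition of `Fin n` into pairs, each pair recorded
as an ordered pair `(i, j)` with `i < j`. -/
def IsOneFactor (n : ℕ) (F : Finset (Fin n × Fin n)) : Prop :=
  (∀ p ∈ F, p.1 < p.2) ∧ ∀ v : Fin n, ∃! p, p ∈ F ∧ (v = p.1 ∨ v = p.2)

/-- The crossing number of a 1-factor: the number of pairs of pairs
`(i,j), (k,l)` in `F` with `i < k < j < l`. -/
def crossingNumber (n : ℕ) (F : Finset (Fin n × Fin n)) : ℕ :=
  ((F ×ˢ F).filter (fun q => q.1.1 < q.2.1 ∧ q.2.1 < q.1.2 ∧ q.1.2 < q.2.2)).card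

/-!
Superpose a perfect matching of the core `H` with terminals `T₁` and one of the core with disjoint
terminals `T₂`. The components of the resulting graph are cycles, doubled edges and paths, and the
ends of the paths are exactly the terminals in `T₁ ∪ T₂`. Exchanging the two matchings along the
path from `a j` to its other end `a l` moves `j` and `l` between `T₁` and `T₂`. Because `G` is
noncrossing, the terminals strictly between `a j` and `a l` are joined among themselves, so their
number is even and `j`, `l` occupy positions of opposite parity in `T₁ ∪ T₂`. The exchange is
therefore a sign-reversing involution, and with `i` the least element of `I` it gives the quadratic
identity `M(H) M(I) = ∑ j ∈ I \ {i}, ± M(H_{ij}) M(I \ {i, j})`, where `M(T)` counts the perfect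
matchings of the core with terminals `T`. This is the expansion of a Pfaffian along its first row.
-/

open Finset
open scoped symmDiff

namespace IsPMOn

variable {α : Type*} {G : SimpleGraph α} {s : Finset α} {m : Finset (Sym2 α)}

lemma mem_of_mem (h : IsPMOn G s m) {e : Sym2 α} {v : α} (he : e ∈ m) (hv : v ∈ e) : v ∈ s :=
  (h.1 e he).2 v hv

lemma eq_of_mem_of_mem (h : IsPMOn G s m) {e e' : Sym2 α} {v : α} (he : e ∈ m) (he' : e' ∈ m)
    (hv : v ∈ e) (hv' : v ∈ e') : e = e' :=
  (h.2 v (h.mem_of_mem he hv)).unique ⟨he, hv⟩ ⟨he', hv'⟩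

lemma subsingleton_setOf_mk_mem (h : IsPMOn G s m) {v : α} :
    {w | s(v, w) ∈ m}.Subsingleton := fun x hx y hy ↦
  Sym2.congr_right.1 (h.eq_of_mem_of_mem hx hy (Sym2.mem_mk_left v x) (Sym2.mem_mk_left v y))

protected lemma empty (G : SimpleGraph α) : IsPMOn G ∅ ∅ := by
  simp [IsPMOn]

lemma even_card (h : IsPMOn G s m) : Even #s := by
  classical
  have one_edge_at : ∀ v ∈ s, #(m.bipartiteAbove (· ∈ ·) v) = 1 := fun v hv ↦
    card_eq_one_iff_existsUnique.2 (by simpa [mem_bipartiteAbove] using h.2 v hv)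
  have two_ends_of : ∀ e ∈ m, #(s.bipartiteBelow (· ∈ ·) e) = 2 := fun e he ↦ by
    have ends_eq : s.bipartiteBelow (· ∈ ·) e = e.toFinset := by
      ext v
      simpa [mem_bipartiteBelow] using fun hv ↦ h.mem_of_mem he hv
    rw [ends_eq, Sym2.card_toFinset_of_not_isDiag e (G.not_isDiag_of_mem_edgeSet (h.1 e he).1)]
  have double_count := sum_card_bipartiteAbove_eq_sum_card_bipartiteBelow
    (s := s) (t := m) (r := fun v e ↦ v ∈ e)
  rw [sum_congr rfl one_edge_at, sum_congr rfl two_ends_of] at double_count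
  simp only [sum_const, smul_eq_mul, mul_one] at double_count
  exact double_count ▸ even_two.mul_left _

end IsPMOn

/-- No edge of `m` joins a vertex of `C` to a vertex outside `C`. -/
def IsSaturated {α : Type*} (C : Set α) (m : Finset (Sym2 α)) : Prop :=
  ∀ e ∈ m, ∀ u ∈ e, ∀ v ∈ e, u ∈ C → v ∈ C

open Classical in
/-- The edge set that agrees with `m₂` on the edges meeting `C` and with `m₁` elsewhere. For `C` a
component of `m₁ ∪ m₂`, the pair `(swapOn C m₁ m₂, swapOn C m₂ m₁)` arises from `(m₁, m₂)` by
exchanging the two edge sets inside that component. -/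
noncomputable def swapOn {α : Type*} (C : Set α) (m₁ m₂ : Finset (Sym2 α)) : Finset (Sym2 α) :=
  {e ∈ m₁ | ¬ ∃ v ∈ e, v ∈ C} ∪ {e ∈ m₂ | ∃ v ∈ e, v ∈ C}

section Swap

variable {α : Type*} {C : Set α} {m₁ m₂ : Finset (Sym2 α)}

lemma mem_swapOn {e : Sym2 α} :
    e ∈ swapOn C m₁ m₂ ↔ (e ∈ m₁ ∧ ¬ ∃ v ∈ e, v ∈ C) ∨ (e ∈ m₂ ∧ ∃ v ∈ e, v ∈ C) := by
  simp only [swapOn, mem_union, mem_filter]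

lemma swapOn_swapOn : swapOn C (swapOn C m₁ m₂) (swapOn C m₂ m₁) = m₁ := by
  ext e
  grind [mem_swapOn]

lemma prod_swapOn_mul_prod_swapOn {R : Type*} [CommMonoid R] (w : Sym2 α → R) :
    (∏ e ∈ swapOn C m₁ m₂, w e) * ∏ e ∈ swapOn C m₂ m₁, w e =
      (∏ e ∈ m₁, w e) * ∏ e ∈ m₂, w e := by
  classical
  have split (m m' : Finset (Sym2 α)) : ∏ e ∈ swapOn C m m', w e =
      (∏ e ∈ m with ¬ ∃ v ∈ e, v ∈ C, w e) * ∏ e ∈ m' with ∃ v ∈ e, v ∈ C, w e :=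
    prod_union (disjoint_filter_filter_not m' m _).symm
  rw [split, split, ← prod_filter_mul_prod_filter_not m₁ (fun e ↦ ∃ v ∈ e, v ∈ C),
    ← prod_filter_mul_prod_filter_not m₂ (fun e ↦ ∃ v ∈ e, v ∈ C)]
  ac_rfl

variable {G : SimpleGraph α} {s t : Finset α}

open Classical in
lemma IsPMOn.swapOn [DecidableEq α] (h₁ : IsPMOn G s m₁) (h₂ : IsPMOn G t m₂)
    (hC₁ : IsSaturated C m₁) (hC₂ : IsSaturated C m₂) :
    IsPMOn G ({v ∈ s | v ∉ C} ∪ {v ∈ t | v ∈ C}) (swapOn C m₁ m₂) := by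
  constructor
  · intro e he
    rcases mem_swapOn.1 he with ⟨he, hout⟩ | ⟨he, u, hu, huC⟩
    · refine ⟨(h₁.1 e he).1, fun v hv ↦ mem_union_left _ (mem_filter.2 ?_)⟩
      exact ⟨h₁.mem_of_mem he hv, fun hvC ↦ hout ⟨v, hv, hvC⟩⟩
    · refine ⟨(h₂.1 e he).1, fun v hv ↦ mem_union_right _ (mem_filter.2 ?_)⟩
      exact ⟨h₂.mem_of_mem he hv, hC₂ e he u hu v hv huC⟩
  · intro v hv
    rcases mem_union.1 hv with hv | hv <;> obtain ⟨hv, hvC⟩ := mem_filter.1 hv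
    · obtain ⟨e, ⟨he, hve⟩, -⟩ := h₁.2 v hv
      have hout : ¬ ∃ u ∈ e, u ∈ C := fun ⟨u, hu, huC⟩ ↦ hvC (hC₁ e he u hu v hve huC)
      refine ⟨e, ⟨mem_swapOn.2 (.inl ⟨he, hout⟩), hve⟩, fun e' ⟨he', hve'⟩ ↦ ?_⟩
      rcases mem_swapOn.1 he' with ⟨he', -⟩ | ⟨he', u, hu, huC⟩
      · exact h₁.eq_of_mem_of_mem he' he hve' hve
      · exact absurd (hC₂ e' he' u hu v hve' huC) hvC
    · obtain ⟨e, ⟨he, hve⟩, -⟩ := h₂.2 v hv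
      refine ⟨e, ⟨mem_swapOn.2 (.inr ⟨he, v, hve, hvC⟩), hve⟩, fun e' ⟨he', hve'⟩ ↦ ?_⟩
      rcases mem_swapOn.1 he' with ⟨-, hout⟩ | ⟨he', -⟩
      · exact absurd ⟨v, hve', hvC⟩ hout
      · exact h₂.eq_of_mem_of_mem he' he hve' hve

open Classical in
lemma IsPMOn.even_card_filter_mem (h : IsPMOn G s m₁) (hC : IsSaturated C m₁) :
    Even #{v ∈ s | v ∈ C} := by
  have restrict := (IsPMOn.empty G).swapOn h (by simp [IsSaturated]) hC
  simpa using restrict.even_card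

open Classical in
lemma IsPMOn.even_card_symmDiff_filter_mem [DecidableEq α] (h₁ : IsPMOn G s m₁)
    (h₂ : IsPMOn G t m₂) (hC₁ : IsSaturated C m₁) (hC₂ : IsSaturated C m₂) :
    Even #{v ∈ s ∆ t | v ∈ C} := by
  have card_eq : #{v ∈ s ∆ t | v ∈ C} + 2 * #{v ∈ s ∩ t | v ∈ C} =
      #{v ∈ s | v ∈ C} + #{v ∈ t | v ∈ C} := by
    have union_eq : s ∪ t = s ∆ t ∪ s ∩ t := (symmDiff_sup_inf s t).symm
    have hdisj : Disjoint (s ∆ t) (s ∩ t) := disjoint_symmDiff_inf s t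
    rw [← card_union_add_card_inter, ← filter_union, ← filter_inter_distrib, union_eq, filter_union,
      card_union_of_disjoint (disjoint_filter_filter hdisj)]
    ring
  have even_sum := (h₁.even_card_filter_mem hC₁).add (h₂.even_card_filter_mem hC₂)
  rw [← card_eq] at even_sum
  exact (Nat.even_add.1 even_sum).2 (even_two_mul _)

end Swap

section MaxDegreeTwo

variable {α : Type*} {S : SimpleGraph α} {x y z u : α}

lemma ncard_neighborSet_toSubgraph_eq_two {p : S.Walk x y} (hp : p.IsPath) (hu : u ∈ p.support)
    (hux : u ≠ x) (huy : u ≠ y) : (p.toSubgraph.neighborSet u).ncard = 2 := by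
  obtain ⟨i, rfl, hi⟩ := p.mem_support_iff_exists_getVert.1 hu
  have hi_pos : i ≠ 0 := by rintro rfl; exact hux p.getVert_zero
  have hi_lt : i < p.length := hi.lt_of_ne (by rintro rfl; exact huy p.getVert_length)
  exact hp.ncard_neighborSet_toSubgraph_internal_eq_two hi_pos hi_lt

lemma not_subsingleton_neighborSet_of_mem_support {p : S.Walk x y} (hp : p.IsPath)
    (hu : u ∈ p.support) (hux : u ≠ x) (huy : u ≠ y) : ¬ (S.neighborSet u).Subsingleton := by
  intro hsub
  obtain ⟨v, w, hvw, hN⟩ := Set.ncard_eq_two.1 (ncard_neighborSet_toSubgraph_eq_two hp hu hux huy)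
  have hpair : ({v, w} : Set α).Subsingleton :=
    hsub.anti (hN ▸ p.toSubgraph.neighborSet_subset u)
  exact hvw (hpair (by simp) (by simp))

lemma toSubgraph_adj_start {p : S.Walk x y} (hxy : x ≠ y) (hx : (S.neighborSet x).Subsingleton)
    (hu : S.Adj x u) : p.toSubgraph.Adj x u := by
  have hsnd := p.toSubgraph_adj_snd (SimpleGraph.Walk.not_nil_of_ne hxy)
  rwa [hx hu hsnd.adj_sub]

lemma toSubgraph_adj_of_encard_le_two (hdeg : ∀ v, (S.neighborSet v).encard ≤ 2) (hxy : x ≠ y)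
    (hx : (S.neighborSet x).Subsingleton) (hy : (S.neighborSet y).Subsingleton) {p : S.Walk x y}
    (hp : p.IsPath) (hu : u ∈ p.support) (hz : S.Adj u z) : p.toSubgraph.Adj u z := by
  rcases eq_or_ne u x with rfl | hux
  · exact toSubgraph_adj_start hxy hx hz
  rcases eq_or_ne u y with rfl | huy
  · simpa using toSubgraph_adj_start (p := p.reverse) hxy.symm hy hz
  have hfin : (S.neighborSet u).Finite := Set.finite_of_encard_le_coe (hdeg u)
  have hcard : (S.neighborSet u).encard ≤ (p.toSubgraph.neighborSet u).encard := by
    rw [← (p.finite_neighborSet_toSubgraph (w := u)).cast_ncard_eq,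
      ncard_neighborSet_toSubgraph_eq_two hp hu hux huy]
    exact hdeg u
  have hN := hfin.eq_of_subset_of_encard_le' (p.toSubgraph.neighborSet_subset u) hcard
  exact (hN ▸ hz : z ∈ p.toSubgraph.neighborSet u)

/-- In a graph of maximum degree two a component contains at most two vertices of degree at most
one: the path joining two of them exhausts the component. -/
lemma eq_of_reachable_of_subsingleton_neighborSet (hdeg : ∀ v, (S.neighborSet v).encard ≤ 2)
    (hx : (S.neighborSet x).Subsingleton) (hy : (S.neighborSet y).Subsingleton)
    (hz : (S.neighborSet z).Subsingleton) (hyx : y ≠ x) (hzx : z ≠ x)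
    (hxy : S.Reachable x y) (hxz : S.Reachable x z) : y = z := by
  obtain ⟨p, hp⟩ := hxy.exists_isPath
  have hzp : z ∈ p.support := p.mem_verts_toSubgraph.1 <|
    hxz.mem_subgraphVerts (H := p.toSubgraph)
      (fun u hu v huv ↦ toSubgraph_adj_of_encard_le_two hdeg hyx.symm hx hy hp
        (p.mem_verts_toSubgraph.1 hu) huv)
      p.start_mem_verts_toSubgraph
  by_contra hyz
  exact not_subsingleton_neighborSet_of_mem_support hp hzp hzx (Ne.symm hyz) hz

end MaxDegreeTwo

/-- The graph on `α` whose edges are those of `m₁` and of `m₂`. When these are perfect matchings of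
two vertex sets `s` and `t`, its components are cycles, doubled edges, isolated vertices, and paths
whose two ends are the points of `s ∆ t` on them. -/
def superposition {α : Type*} (m₁ m₂ : Finset (Sym2 α)) : SimpleGraph α :=
  SimpleGraph.fromEdgeSet (m₁ ∪ m₂)

section Superposition

variable {α : Type*} {m₁ m₂ : Finset (Sym2 α)} {u v : α}

lemma superposition_adj :
    (superposition m₁ m₂).Adj u v ↔ (s(u, v) ∈ m₁ ∨ s(u, v) ∈ m₂) ∧ u ≠ v := by
  simp [superposition, or_and_right]

lemma superposition_comm : superposition m₁ m₂ = superposition m₂ m₁ := by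
  simp only [superposition, Set.union_comm]

lemma superposition_swapOn (C : Set α) :
    superposition (swapOn C m₁ m₂) (swapOn C m₂ m₁) = superposition m₁ m₂ := by
  ext u v
  grind [superposition_adj, mem_swapOn]

/-- The union of the components of the superposition that meet `K`. -/
def reachableFrom (m₁ m₂ : Finset (Sym2 α)) (K : Set α) : Set α :=
  {v | ∃ u ∈ K, (superposition m₁ m₂).Reachable u v}

lemma reachableFrom_comm (K : Set α) : reachableFrom m₁ m₂ K = reachableFrom m₂ m₁ K := by
  simp only [reachableFrom, superposition_comm]

lemma reachableFrom_swapOn (C K : Set α) :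
    reachableFrom (swapOn C m₁ m₂) (swapOn C m₂ m₁) K = reachableFrom m₁ m₂ K := by
  simp only [reachableFrom, superposition_swapOn]

lemma reachableFrom_singleton_eq (huv : (superposition m₁ m₂).Reachable u v) :
    reachableFrom m₁ m₂ {u} = reachableFrom m₁ m₂ {v} := by
  ext x
  simpa [reachableFrom] using ⟨huv.symm.trans, huv.trans⟩

lemma isSaturated_reachableFrom_left (K : Set α) : IsSaturated (reachableFrom m₁ m₂ K) m₁ := by
  rintro e he u hu v hv ⟨k, hk, hku⟩
  rcases eq_or_ne u v with rfl | huv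
  · exact ⟨k, hk, hku⟩
  · have he_eq : e = s(u, v) := (Sym2.mem_and_mem_iff huv).1 ⟨hu, hv⟩
    have hadj : (superposition m₁ m₂).Adj u v := superposition_adj.2 ⟨.inl (he_eq ▸ he), huv⟩
    exact ⟨k, hk, hku.trans hadj.reachable⟩

lemma isSaturated_reachableFrom_right (K : Set α) : IsSaturated (reachableFrom m₁ m₂ K) m₂ :=
  reachableFrom_comm K ▸ isSaturated_reachableFrom_left K

variable {G : SimpleGraph α} {s t : Finset α} (h₁ : IsPMOn G s m₁) (h₂ : IsPMOn G t m₂)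
include h₁ h₂

lemma superposition_le : superposition m₁ m₂ ≤ G := fun _ _ huv ↦
  (superposition_adj.1 huv).1.elim (fun he ↦ (h₁.1 _ he).1) fun he ↦ (h₂.1 _ he).1

lemma encard_neighborSet_superposition_le_two :
    ((superposition m₁ m₂).neighborSet v).encard ≤ 2 := by
  have hsub : (superposition m₁ m₂).neighborSet v ⊆ {w | s(v, w) ∈ m₁} ∪ {w | s(v, w) ∈ m₂} :=
    fun w hw ↦ (superposition_adj.1 hw).1
  calc ((superposition m₁ m₂).neighborSet v).encard
      ≤ {w | s(v, w) ∈ m₁}.encard + {w | s(v, w) ∈ m₂}.encard :=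
        (Set.encard_mono hsub).trans (Set.encard_union_le _ _)
    _ ≤ 1 + 1 := add_le_add (Set.encard_le_one_iff_subsingleton.2 h₁.subsingleton_setOf_mk_mem)
        (Set.encard_le_one_iff_subsingleton.2 h₂.subsingleton_setOf_mk_mem)
    _ = 2 := one_add_one_eq_two

lemma subsingleton_neighborSet_superposition (hv : v ∉ s ∨ v ∉ t) :
    ((superposition m₁ m₂).neighborSet v).Subsingleton := by
  rcases hv with hv | hv
  · refine h₂.subsingleton_setOf_mk_mem.anti fun w hw ↦ (superposition_adj.1 hw).1.resolve_left ?_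
    exact fun he ↦ hv (h₁.mem_of_mem he (Sym2.mem_mk_left v w))
  · refine h₁.subsingleton_setOf_mk_mem.anti fun w hw ↦ (superposition_adj.1 hw).1.resolve_right ?_
    exact fun he ↦ hv (h₂.mem_of_mem he (Sym2.mem_mk_left v w))

lemma mem_or_mem_of_reachable_superposition (huv : (superposition m₁ m₂).Reachable u v)
    (hne : u ≠ v) : v ∈ s ∨ v ∈ t := by
  obtain ⟨p⟩ := huv.symm
  have hadj := p.adj_snd (SimpleGraph.Walk.not_nil_of_ne hne.symm)
  exact (superposition_adj.1 hadj).1.imp (h₁.mem_of_mem · (Sym2.mem_mk_left _ _))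
    (h₂.mem_of_mem · (Sym2.mem_mk_left _ _))

lemma exists_reachable_superposition_of_mem_symmDiff [DecidableEq α] (hv : v ∈ s ∆ t) :
    ∃ u ∈ s ∆ t, u ≠ v ∧ (superposition m₁ m₂).Reachable v u := by
  classical
  have heven := h₁.even_card_symmDiff_filter_mem h₂
    (isSaturated_reachableFrom_left (m₂ := m₂) {v}) (isSaturated_reachableFrom_right {v})
  have hmem : v ∈ {u ∈ s ∆ t | u ∈ reachableFrom m₁ m₂ {v}} :=
    mem_filter.2 ⟨hv, v, rfl, .rfl⟩
  have two_le := Nat.le_of_dvd (card_pos.2 ⟨v, hmem⟩) heven.two_dvd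
  obtain ⟨u, hu_filter, huv⟩ := exists_mem_ne two_le v
  obtain ⟨hu, _, rfl, hreach⟩ := mem_filter.1 hu_filter
  exact ⟨u, hu, huv, hreach⟩

end Superposition

section Terminals

variable {α : Type*} {n : ℕ} {a : Fin n → α} {T T₁ T₂ : Finset (Fin n)} {j k l : Fin n}

lemma not_disjointPaths_of_noncrossingList {G : SimpleGraph α}
    (hnc : NoncrossingList G (List.ofFn a)) {i : Fin n} (hij : i < j) (hjk : j < k) (hkl : k < l) :
    ¬ DisjointPaths G (Set.range a) (a i) (a k) (a j) (a l) := by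
  have hlen : n = (List.ofFn a).length := by simp
  have hrange : {x | x ∈ List.ofFn a} = Set.range a := by
    ext x; simp [List.mem_ofFn]
  rw [← hrange]
  simpa only [List.get_ofFn, Fin.cast_cast, Fin.cast_eq_self] using
    hnc (i.cast hlen) (j.cast hlen) (k.cast hlen) (l.cast hlen) hij hjk hkl

/-- The vertices that are not terminals `a k`, together with the terminals whose index lies in `T`.
Thus `coreWith a ∅` is the vertex set of `H` and `coreWith a {i, j}` that of `H_{ij}`. -/
def coreWith [Fintype α] [DecidableEq α] (a : Fin n → α) (T : Finset (Fin n)) : Finset α :=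
  univ \ univ.image a ∪ T.image a

section CoreWith

variable [Fintype α] [DecidableEq α]

lemma coreWith_univ : coreWith a univ = univ :=
  sdiff_union_of_subset (subset_univ _)

lemma apply_mem_coreWith (ha : Function.Injective a) : a k ∈ coreWith a T ↔ k ∈ T := by
  simp [coreWith, ha.eq_iff]

lemma mem_coreWith_of_notMem_range {x : α} (hx : x ∉ Set.range a) : x ∈ coreWith a T := by
  simpa [coreWith] using .inl fun k hk ↦ hx ⟨k, hk⟩

lemma symmDiff_coreWith (ha : Function.Injective a) (hT : Disjoint T₁ T₂) :
    coreWith a T₁ ∆ coreWith a T₂ = (T₁ ∪ T₂).image a := by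
  ext x
  by_cases hx : x ∈ Set.range a
  · obtain ⟨k, rfl⟩ := hx
    have hunion : T₁ ∪ T₂ = T₁ ∆ T₂ := hT.symmDiff_eq_sup.symm
    simp [hunion, mem_symmDiff, apply_mem_coreWith ha, ha.eq_iff]
  · have hx_image : x ∉ (T₁ ∪ T₂).image a := fun h ↦ by
      obtain ⟨k, -, rfl⟩ := mem_image.1 h
      exact hx ⟨k, rfl⟩
    simp [mem_symmDiff, mem_coreWith_of_notMem_range hx, hx_image]

end CoreWith

/-- The sign `(-1)^r`, where `r` is the number of elements of `I` below `j`. -/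
def positionSign (R : Type*) [Ring R] (I : Finset (Fin n)) (j : Fin n) : R :=
  (-1) ^ #{k ∈ I | k < j}

/-- The distinct terminals `a j` and `a l` lie in one component of the superposition. -/
def Linked (a : Fin n → α) (m₁ m₂ : Finset (Sym2 α)) (j l : Fin n) : Prop :=
  j ≠ l ∧ (superposition m₁ m₂).Reachable (a j) (a l)

variable {m₁ m₂ : Finset (Sym2 α)}

lemma Linked.symm (h : Linked a m₁ m₂ j l) : Linked a m₁ m₂ l j :=
  ⟨h.1.symm, h.2.symm⟩

lemma linked_comm : Linked a m₁ m₂ j l ↔ Linked a m₂ m₁ j l := by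
  simp only [Linked, superposition_comm (m₁ := m₁)]

lemma linked_swapOn {C : Set α} :
    Linked a (swapOn C m₁ m₂) (swapOn C m₂ m₁) j l ↔ Linked a m₁ m₂ j l := by
  simp only [Linked, superposition_swapOn]

variable [Fintype α] [DecidableEq α] {G : SimpleGraph α} (ha : Function.Injective a)
  (h₁ : IsPMOn G (coreWith a T₁) m₁) (h₂ : IsPMOn G (coreWith a T₂) m₂)
include ha h₁ h₂

lemma Linked.right_mem (h : Linked a m₁ m₂ j l) : l ∈ T₁ ∪ T₂ := by
  simpa [apply_mem_coreWith ha] using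
    mem_or_mem_of_reachable_superposition h₁ h₂ h.2 (ha.ne h.1)

variable (hT : Disjoint T₁ T₂)
include hT

lemma exists_linked (hj : j ∈ T₁ ∪ T₂) : ∃ l, Linked a m₁ m₂ j l := by
  have hmem : a j ∈ coreWith a T₁ ∆ coreWith a T₂ := by
    rw [symmDiff_coreWith ha hT]
    exact mem_image_of_mem a hj
  obtain ⟨u, hu, huj, hreach⟩ := exists_reachable_superposition_of_mem_symmDiff h₁ h₂ hmem
  rw [symmDiff_coreWith ha hT] at hu
  obtain ⟨l, -, rfl⟩ := mem_image.1 hu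
  exact ⟨l, fun hjl ↦ huj (congrArg a hjl.symm), hreach⟩

lemma subsingleton_neighborSet_superposition_apply :
    ((superposition m₁ m₂).neighborSet (a k)).Subsingleton := by
  refine subsingleton_neighborSet_superposition h₁ h₂ ?_
  rw [apply_mem_coreWith ha, apply_mem_coreWith ha, ← not_and_or]
  exact fun h ↦ disjoint_left.1 hT h.1 h.2

lemma Linked.unique (hk : Linked a m₁ m₂ j k) (hl : Linked a m₁ m₂ j l) : k = l :=
  have leaf (i : Fin n) := subsingleton_neighborSet_superposition_apply ha h₁ h₂ hT (k := i)
  ha <| eq_of_reachable_of_subsingleton_neighborSet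
    (fun _ ↦ encard_neighborSet_superposition_le_two h₁ h₂) (leaf j) (leaf k) (leaf l)
    (ha.ne hk.1.symm) (ha.ne hl.1.symm) hk.2 hl.2

lemma Linked.exists_isPath (h : Linked a m₁ m₂ j l) :
    ∃ p : G.Walk (a j) (a l), p.IsPath ∧
      (∀ u ∈ p.support, (superposition m₁ m₂).Reachable (a j) u) ∧
      ∀ u ∈ p.support, u ≠ a j → u ≠ a l → u ∉ Set.range a := by
  obtain ⟨p, hp⟩ := h.2.exists_isPath
  have hsupp : (p.mapLe (superposition_le h₁ h₂)).support = p.support :=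
    p.support_mapLe_eq_support _
  refine ⟨p.mapLe (superposition_le h₁ h₂), hp.mapLe _, fun u hu ↦ ?_, fun u hu huj hul ↦ ?_⟩
  · exact ⟨p.takeUntil u (hsupp ▸ hu)⟩
  · rintro ⟨k, rfl⟩
    exact not_subsingleton_neighborSet_of_mem_support hp (hsupp ▸ hu) huj hul
      (subsingleton_neighborSet_superposition_apply ha h₁ h₂ hT)

lemma Linked.not_crossing (hnc : NoncrossingList G (List.ofFn a)) {i : Fin n} (hij : i < j)
    (hjk : j < k) (hkl : k < l) (hik : Linked a m₁ m₂ i k) : ¬ Linked a m₁ m₂ j l := by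
  intro hjl
  obtain ⟨p, hp, hp_reach, hp_avoid⟩ := hik.exists_isPath ha h₁ h₂ hT
  obtain ⟨q, hq, hq_reach, hq_avoid⟩ := hjl.exists_isPath ha h₁ h₂ hT
  refine not_disjointPaths_of_noncrossingList hnc hij hjk hkl
    ⟨p, q, hp, hq, fun u hup huq ↦ ?_, hp_avoid, hq_avoid⟩
  have hij_linked : Linked a m₁ m₂ i j :=
    ⟨hij.ne, (hp_reach u hup).trans (hq_reach u huq).symm⟩
  exact hjk.ne (hij_linked.unique ha h₁ h₂ hT hik)

lemma Linked.between_of_between (hnc : NoncrossingList G (List.ofFn a)) {i : Fin n}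
    (hjl : Linked a m₁ m₂ j l) (hik : Linked a m₁ m₂ i k) (hji : j < i) (hil : i < l) :
    j < k ∧ k < l := by
  have hkj : k ≠ j := fun h ↦ hil.ne ((h ▸ hik.symm).unique ha h₁ h₂ hT hjl)
  have hkl : k ≠ l := fun h ↦ hji.ne' ((h ▸ hik.symm).unique ha h₁ h₂ hT hjl.symm)
  constructor
  · by_contra! hle
    exact hik.symm.not_crossing ha h₁ h₂ hT hnc (hle.lt_of_ne hkj) hji hil hjl
  · by_contra! hle
    exact hjl.not_crossing ha h₁ h₂ hT hnc hji hil (hle.lt_of_ne hkl.symm) hik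

/-- The components through the terminals strictly between two linked ones contain no terminals
outside that range, so these terminals are exhausted by pairs of path ends. -/
lemma Linked.even_card_between (hnc : NoncrossingList G (List.ofFn a))
    (hjl : Linked a m₁ m₂ j l) : Even #{k ∈ T₁ ∪ T₂ | j < k ∧ k < l} := by
  classical
  set K : Finset (Fin n) := {k ∈ T₁ ∪ T₂ | j < k ∧ k < l}
  have heven := h₁.even_card_symmDiff_filter_mem h₂
    (isSaturated_reachableFrom_left (m₂ := m₂) (a '' K)) (isSaturated_reachableFrom_right (a '' K))
  have mem_iff : ∀ k ∈ T₁ ∪ T₂, a k ∈ reachableFrom m₁ m₂ (a '' K) ↔ j < k ∧ k < l := by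
    refine fun k hk ↦ ⟨?_, fun hjkl ↦ ⟨a k, ⟨k, mem_filter.2 ⟨hk, hjkl⟩, rfl⟩, .rfl⟩⟩
    rintro ⟨-, ⟨i, hi, rfl⟩, hreach⟩
    obtain ⟨-, hji, hil⟩ := mem_filter.1 hi
    rcases eq_or_ne i k with rfl | hik
    · exact ⟨hji, hil⟩
    · exact hjl.between_of_between ha h₁ h₂ hT hnc ⟨hik, hreach⟩ hji hil
  rwa [symmDiff_coreWith ha hT, filter_image, card_image_of_injective _ ha,
    filter_congr mem_iff] at heven

lemma Linked.positionSign_add_positionSign (R : Type*) [Ring R]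
    (hnc : NoncrossingList G (List.ofFn a)) (hjl : Linked a m₁ m₂ j l) :
    positionSign R (T₁ ∪ T₂) j + positionSign R (T₁ ∪ T₂) l = 0 := by
  wlog hlt : j < l generalizing j l
  · rw [add_comm]
    exact this hjl.symm (lt_of_le_of_ne (not_lt.1 hlt) hjl.1.symm)
  have hj : j ∈ T₁ ∪ T₂ := hjl.symm.right_mem ha h₁ h₂
  have below_l : {k ∈ T₁ ∪ T₂ | k < l} =
      insert j ({k ∈ T₁ ∪ T₂ | k < j} ∪ {k ∈ T₁ ∪ T₂ | j < k ∧ k < l}) := by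
    ext k
    grind
  have hcard : #{k ∈ T₁ ∪ T₂ | k < l} =
      #{k ∈ T₁ ∪ T₂ | k < j} + #{k ∈ T₁ ∪ T₂ | j < k ∧ k < l} + 1 := by
    rw [below_l, card_insert_of_notMem (by simp), card_union_of_disjoint]
    exact disjoint_filter.2 fun k _ hkj hjk ↦ hkj.asymm hjk.1
  rw [positionSign, positionSign, hcard, pow_succ, pow_add,
    (hjl.even_card_between ha h₁ h₂ hT hnc).neg_one_pow]
  simp

lemma Linked.isPMOn_swapOn (hjl : Linked a m₁ m₂ j l) :
    IsPMOn G (coreWith a (T₁ ∆ {j, l})) (swapOn (reachableFrom m₁ m₂ {a j}) m₁ m₂) := by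
  classical
  have hj : j ∈ T₁ ∪ T₂ := hjl.symm.right_mem ha h₁ h₂
  have hl : l ∈ T₁ ∪ T₂ := hjl.right_mem ha h₁ h₂
  have mem_iff (k : Fin n) : a k ∈ reachableFrom m₁ m₂ {a j} ↔ k = j ∨ k = l := by
    constructor
    · rintro ⟨-, rfl, hreach⟩
      rcases eq_or_ne j k with hjk | hjk
      · exact .inl hjk.symm
      · exact .inr (Linked.unique ha h₁ h₂ hT ⟨hjk, hreach⟩ hjl)
    · rintro (rfl | rfl)
      exacts [⟨_, rfl, .rfl⟩, ⟨_, rfl, hjl.2⟩]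
  convert h₁.swapOn h₂ (isSaturated_reachableFrom_left {a j})
    (isSaturated_reachableFrom_right {a j})
  ext x
  by_cases hx : x ∈ Set.range a
  · obtain ⟨k, rfl⟩ := hx
    have hk : k ∈ T₁ → k ∉ T₂ := fun hk ↦ disjoint_left.1 hT hk
    simp only [apply_mem_coreWith ha, mem_symmDiff, mem_union, mem_filter, mem_iff, mem_insert,
      mem_singleton] at hj hl ⊢
    grind
  · simp [mem_coreWith_of_notMem_range hx, em']

end Terminals

section Condensation

variable {α : Type*} {n : ℕ} {a : Fin n → α} {I : Finset (Fin n)} {i l : Fin n}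
  {z : Fin n × Finset (Sym2 α) × Finset (Sym2 α)}

/-- Exchanges two matchings on the component of the marked terminal, and moves the mark to the
terminal `l`, which is meant to be the other end of that component. -/
noncomputable def swapMarked (a : Fin n → α) (l : Fin n)
    (z : Fin n × Finset (Sym2 α) × Finset (Sym2 α)) :
    Fin n × Finset (Sym2 α) × Finset (Sym2 α) :=
  let C := reachableFrom z.2.1 z.2.2 {a z.1}
  (l, swapOn C z.2.1 z.2.2, swapOn C z.2.2 z.2.1)

lemma swapMarked_swapMarked (hl : Linked a z.2.1 z.2.2 z.1 l) :
    swapMarked a z.1 (swapMarked a l z) = z := by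
  simp only [swapMarked, reachableFrom_swapOn, ← reachableFrom_singleton_eq hl.2, swapOn_swapOn]

variable [Fintype α] [DecidableEq α]

/-- A triple `(j, m₁, m₂)` contributing to the condensation identity for `I` and `i`: perfect
matchings of the core with the terminals `{i} ∆ {j}`, which is empty if `j = i` and `{i, j}`
otherwise, and of the core with the remaining terminals of `I`. -/
structure IsMarkedPair (G : SimpleGraph α) (a : Fin n → α) (I : Finset (Fin n)) (i : Fin n)
    (z : Fin n × Finset (Sym2 α) × Finset (Sym2 α)) : Prop where
  mem : z.1 ∈ I
  left : IsPMOn G (coreWith a ({i} ∆ {z.1})) z.2.1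
  right : IsPMOn G (coreWith a (I \ ({i} ∆ {z.1}))) z.2.2

variable {G : SimpleGraph α}

lemma IsMarkedPair.union_eq (hz : IsMarkedPair G a I i z) (hi : i ∈ I) :
    {i} ∆ {z.1} ∪ I \ ({i} ∆ {z.1}) = I :=
  union_sdiff_of_subset fun k hk ↦ by
    rcases mem_symmDiff.1 hk with ⟨hk, -⟩ | ⟨hk, -⟩ <;> rw [mem_singleton.1 hk]
    exacts [hi, hz.mem]

variable (ha : Function.Injective a) (hi : i ∈ I)
include ha hi

lemma IsMarkedPair.exists_linked (hz : IsMarkedPair G a I i z) :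
    ∃ l, Linked a z.2.1 z.2.2 z.1 l :=
  _root_.exists_linked ha hz.left hz.right disjoint_sdiff (by rw [hz.union_eq hi]; exact hz.mem)

lemma IsMarkedPair.swapMarked (hz : IsMarkedPair G a I i z) (hl : Linked a z.2.1 z.2.2 z.1 l) :
    IsMarkedPair G a I i (swapMarked a l z) := by
  have hlI : l ∈ I := hz.union_eq hi ▸ hl.right_mem ha hz.left hz.right
  have left := hl.isPMOn_swapOn ha hz.left hz.right disjoint_sdiff
  have right := (linked_comm.1 hl).isPMOn_swapOn ha hz.right hz.left sdiff_disjoint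
  have left_terminals : ({i} ∆ {z.1} : Finset (Fin n)) ∆ {z.1, l} = {i} ∆ {l} := by
    have hne := hl.1
    ext k
    simp only [mem_symmDiff, mem_insert, mem_singleton]
    grind
  have right_terminals : (I \ ({i} ∆ {z.1})) ∆ {z.1, l} = I \ ({i} ∆ {l}) := by
    have hmem := hz.mem
    have hne := hl.1
    ext k
    simp only [mem_symmDiff, mem_sdiff, mem_insert, mem_singleton]
    grind
  rw [left_terminals] at left
  rw [right_terminals, reachableFrom_comm] at right
  exact ⟨hlI, left, right⟩

lemma IsMarkedPair.positionSign_add_positionSign (R : Type*) [Ring R]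
    (hnc : NoncrossingList G (List.ofFn a)) (hz : IsMarkedPair G a I i z)
    (hl : Linked a z.2.1 z.2.2 z.1 l) : positionSign R I z.1 + positionSign R I l = 0 := by
  simpa only [hz.union_eq hi] using
    hl.positionSign_add_positionSign ha hz.left hz.right disjoint_sdiff R hnc

variable {R : Type*} [CommRing R] (w : Sym2 α → R)

open Classical in
lemma sum_isMarkedPair_eq_zero (hnc : NoncrossingList G (List.ofFn a)) :
    ∑ z with IsMarkedPair G a I i z,
      positionSign R I z.1 * ((∏ e ∈ z.2.1, w e) * ∏ e ∈ z.2.2, w e) = 0 := by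
  have hlinked : ∀ z, IsMarkedPair G a I i z → ∃ l, Linked a z.2.1 z.2.2 z.1 l :=
    fun z hz ↦ hz.exists_linked ha hi
  have : Nonempty (Fin n) := ⟨i⟩
  choose! partner hpartner using hlinked
  refine sum_involution (fun z _ ↦ swapMarked a (partner z) z) (fun z hz ↦ ?_)
    (fun z hz _ hfix ↦ ?_) (fun z hz ↦ ?_) (fun z hz ↦ ?_) <;>
    simp only [mem_filter_univ] at hz ⊢ <;> have hl := hpartner z hz
  · simp only [swapMarked, prod_swapOn_mul_prod_swapOn]
    rw [← add_mul, hz.positionSign_add_positionSign ha hi R hnc hl, zero_mul]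
  · exact hl.1 (congrArg Prod.fst hfix).symm
  · exact hz.swapMarked ha hi hl
  · have hback := linked_swapOn.1 (hpartner _ (hz.swapMarked ha hi hl))
    rw [hback.unique ha hz.left hz.right disjoint_sdiff hl.symm]
    exact swapMarked_swapMarked hl

lemma sum_positionSign_mul_pmSum_mul_pmSum_eq_zero (hnc : NoncrossingList G (List.ofFn a)) :
    ∑ j ∈ I, positionSign R I j * (pmSum G w (coreWith a ({i} ∆ {j})) *
      pmSum G w (coreWith a (I \ ({i} ∆ {j})))) = 0 := by
  classical
  rw [← sum_isMarkedPair_eq_zero ha hi w hnc]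
  simp only [pmSum, sum_mul_sum, ← sum_product']
  simp only [mul_sum]
  symm
  refine sum_finset_product _ _ _ fun z ↦ ?_
  simp only [mem_filter_univ, mem_product]
  exact ⟨fun hz ↦ ⟨hz.mem, hz.left, hz.right⟩, fun ⟨hj, h₁, h₂⟩ ↦ ⟨hj, h₁, h₂⟩⟩

/-- Isolating the term `j = i`, which involves the core itself, turns the vanishing alternating sum
into an expansion along `i`. -/
lemma pmSum_empty_mul_pmSum (hnc : NoncrossingList G (List.ofFn a)) (hmin : ∀ k ∈ I, i ≤ k) :
    pmSum G w (coreWith a ∅) * pmSum G w (coreWith a I) =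
      ∑ j ∈ I.erase i, positionSign R (I.erase i) j *
        (pmSum G w (coreWith a {i, j}) * pmSum G w (coreWith a (I \ {i, j}))) := by
  have hzero := sum_positionSign_mul_pmSum_mul_pmSum_eq_zero ha hi w hnc
  have sign_i : positionSign R I i = 1 := by
    rw [positionSign, filter_false_of_mem fun k hk ↦ (hmin k hk).not_gt, card_empty, pow_zero]
  have sign_erase : ∀ j ∈ I.erase i, positionSign R I j = -positionSign R (I.erase i) j := by
    intro j hj
    have hij : i < j := (hmin j (mem_of_mem_erase hj)).lt_of_ne (ne_of_mem_erase hj).symm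
    have hi_below : i ∈ {k ∈ I | k < j} := mem_filter.2 ⟨hi, hij⟩
    rw [positionSign, positionSign, ← card_erase_add_one hi_below, ← filter_erase,
      pow_succ, mul_neg_one]
  have pair_eq : ∀ j ∈ I.erase i, ({i} ∆ {j} : Finset (Fin n)) = {i, j} := fun j hj ↦
    (disjoint_singleton.2 (ne_of_mem_erase hj).symm).symmDiff_eq_sup
  rw [← add_sum_erase _ _ hi, sign_i, symmDiff_self, bot_eq_empty, sdiff_empty, one_mul] at hzero
  rw [eq_neg_of_add_eq_zero_left hzero, ← sum_neg_distrib]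
  refine sum_congr rfl fun j hj ↦ ?_
  rw [sign_erase j hj, pair_eq j hj, neg_mul, neg_neg]

end Condensation

section Pfaffian

variable {n : ℕ} {I : Finset (Fin n)} {F : Finset (Fin n × Fin n)} {i j : Fin n}

/-- A partition of `I` into pairs, each recorded as `(i, j)` with `i < j`; the version of
`IsOneFactor` relative to a set of indices. -/
structure IsOneFactorOn (I : Finset (Fin n)) (F : Finset (Fin n × Fin n)) : Prop where
  fst_lt_snd : ∀ p ∈ F, p.1 < p.2
  fst_mem : ∀ p ∈ F, p.1 ∈ I
  snd_mem : ∀ p ∈ F, p.2 ∈ I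
  existsUnique : ∀ v ∈ I, ∃! p, p ∈ F ∧ (v = p.1 ∨ v = p.2)

lemma isOneFactorOn_univ : IsOneFactorOn univ F ↔ IsOneFactor n F :=
  ⟨fun h ↦ ⟨h.fst_lt_snd, fun v ↦ h.existsUnique v (mem_univ v)⟩,
    fun h ↦ ⟨h.1, fun _ _ ↦ mem_univ _, fun _ _ ↦ mem_univ _, fun v _ ↦ h.2 v⟩⟩

lemma isOneFactorOn_empty : IsOneFactorOn ∅ F ↔ F = ∅ :=
  ⟨fun h ↦ eq_empty_of_forall_notMem fun p hp ↦ notMem_empty _ (h.fst_mem p hp),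
    by rintro rfl; constructor <;> simp⟩

lemma isOneFactorOn_insert (hi : i ∈ I) (hj : j ∈ I) (hij : i < j) (hF : (i, j) ∉ F) :
    IsOneFactorOn I (insert (i, j) F) ↔ IsOneFactorOn (I \ {i, j}) F := by
  constructor
  · rintro ⟨hlt, hfst, hsnd, huniq⟩
    have avoids : ∀ p ∈ F, ∀ v, v = p.1 ∨ v = p.2 → v ∈ I \ {i, j} := by
      intro p hp v hv
      have hvI : v ∈ I := by grind
      have eq_new := (huniq v hvI).unique ⟨mem_insert_of_mem hp, hv⟩ (y₂ := (i, j))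
      grind
    refine ⟨fun p hp ↦ hlt p (mem_insert_of_mem hp), fun p hp ↦ avoids p hp _ (.inl rfl),
      fun p hp ↦ avoids p hp _ (.inr rfl), fun v hv ↦ ?_⟩
    obtain ⟨p, hp, hp_unique⟩ := huniq v (by grind)
    exact ⟨p, by grind, fun q hq ↦ hp_unique q (by grind)⟩
  · rintro ⟨hlt, hfst, hsnd, huniq⟩
    refine ⟨by grind, by grind, by grind, fun v hv ↦ ?_⟩
    by_cases hvij : v = i ∨ v = j
    · exact ⟨(i, j), by grind, by grind⟩
    · obtain ⟨p, hp, hp_unique⟩ := huniq v (by grind)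
      exact ⟨p, by grind, fun q hq ↦ hp_unique q (by grind)⟩

lemma IsOneFactorOn.exists_mk_mem (hF : IsOneFactorOn I F) (hi : i ∈ I) (hmin : ∀ k ∈ I, i ≤ k) :
    ∃ j, (i, j) ∈ F := by
  obtain ⟨⟨k, l⟩, ⟨hkl, rfl | rfl⟩, -⟩ := hF.existsUnique i hi
  · exact ⟨l, hkl⟩
  · exact absurd (hF.fst_lt_snd _ hkl) (hmin k (hF.fst_mem _ hkl)).not_gt

lemma IsOneFactorOn.prod_eq {M : Type*} [CommMonoid M] (hF : IsOneFactorOn I F) (f : Fin n → M) :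
    ∏ k ∈ I, f k = ∏ p ∈ F, f p.1 * f p.2 := by
  have hI : I = F.biUnion fun p ↦ {p.1, p.2} := by
    ext k
    simp only [mem_biUnion, mem_insert, mem_singleton]
    refine ⟨fun hk ↦ (hF.existsUnique k hk).exists, ?_⟩
    rintro ⟨p, hp, rfl | rfl⟩
    exacts [hF.fst_mem p hp, hF.snd_mem p hp]
  have hdisj : (F : Set (Fin n × Fin n)).PairwiseDisjoint fun p ↦ ({p.1, p.2} : Finset (Fin n)) :=
    fun p hp q hq hpq ↦ disjoint_left.2 fun k hkp hkq ↦ hpq <|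
      (hF.existsUnique k (hI ▸ mem_biUnion.2 ⟨p, hp, hkp⟩)).unique
        ⟨hp, by simpa using hkp⟩ ⟨hq, by simpa using hkq⟩
  conv_lhs => rw [hI]
  rw [prod_biUnion hdisj]
  exact prod_congr rfl fun p hp ↦ prod_pair (hF.fst_lt_snd p hp).ne

lemma pow_card_filter_eq_prod_ite {M ι : Type*} [CommMonoid M] (b : M) (s : Finset ι)
    (p : ι → Prop) [DecidablePred p] :
    b ^ #{k ∈ s | p k} = ∏ k ∈ s, if p k then b else 1 := by
  rw [prod_ite, prod_const, prod_const_one, mul_one]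

variable {R : Type*} [CommRing R]

/-- A pair of `F` contributes to both sides, or twice to the right-hand side, or to neither. -/
lemma IsOneFactorOn.neg_one_pow_card_filter_eq_positionSign (hF : IsOneFactorOn I F) (hj : j ∉ I) :
    (-1) ^ #{p ∈ F | p.1 < j ∧ j < p.2} = positionSign R I j := by
  rw [positionSign, pow_card_filter_eq_prod_ite, pow_card_filter_eq_prod_ite, hF.prod_eq]
  refine prod_congr rfl fun p hp ↦ ?_
  have hlt := hF.fst_lt_snd p hp
  have hne : p.2 ≠ j := fun h ↦ hj (h ▸ hF.snd_mem p hp)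
  grind

lemma crossingNumber_insert (hF : ∀ p ∈ F, i < p.1) :
    crossingNumber n (insert (i, j) F) =
      crossingNumber n F + #{p ∈ F | p.1 < j ∧ j < p.2} := by
  have crossings_eq : {q ∈ insert (i, j) F ×ˢ insert (i, j) F |
        q.1.1 < q.2.1 ∧ q.2.1 < q.1.2 ∧ q.1.2 < q.2.2} =
      {q ∈ F ×ˢ F | q.1.1 < q.2.1 ∧ q.2.1 < q.1.2 ∧ q.1.2 < q.2.2} ∪
        {(i, j)} ×ˢ {p ∈ F | p.1 < j ∧ j < p.2} := by
    ext ⟨p, q⟩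
    simp only [mem_filter, mem_product, mem_union, mem_insert, mem_singleton]
    grind
  have hdisj : Disjoint {q ∈ F ×ˢ F | q.1.1 < q.2.1 ∧ q.2.1 < q.1.2 ∧ q.1.2 < q.2.2}
      ({(i, j)} ×ˢ {p ∈ F | p.1 < j ∧ j < p.2}) := by
    refine disjoint_left.2 fun q hq hq_new ↦ ?_
    simp only [mem_filter, mem_product, mem_singleton] at hq hq_new
    grind
  rw [crossingNumber, crossings_eq, card_union_of_disjoint hdisj, card_product, card_singleton,
    one_mul, crossingNumber]

open Classical in
/-- The Pfaffian of the submatrix of `x` with rows and columns in `I`, defined as the signed sum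
over 1-factors of `I`. Only the entries `x i j` with `i < j` matter. -/
noncomputable def pfaffian (x : Fin n → Fin n → R) (I : Finset (Fin n)) : R :=
  ∑ F with IsOneFactorOn I F, (-1) ^ crossingNumber n F * ∏ p ∈ F, x p.1 p.2

lemma pfaffian_empty (x : Fin n → Fin n → R) : pfaffian x ∅ = 1 := by
  simp [pfaffian, isOneFactorOn_empty, filter_eq', crossingNumber]

lemma pfaffian_term_insert {x : Fin n → Fin n → R} (hmin : ∀ k ∈ I, i ≤ k)
    (hF : IsOneFactorOn (I \ {i, j}) F) :
    (-1) ^ crossingNumber n (insert (i, j) F) * ∏ p ∈ insert (i, j) F, x p.1 p.2 =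
      positionSign R (I.erase i) j *
        (x i j * ((-1) ^ crossingNumber n F * ∏ p ∈ F, x p.1 p.2)) := by
  have hlt : ∀ p ∈ F, i < p.1 := fun p hp ↦ by
    obtain ⟨hpI, hpij⟩ := mem_sdiff.1 (hF.fst_mem p hp)
    exact (hmin _ hpI).lt_of_ne fun h ↦ hpij (by simp [h])
  have sign_eq : positionSign R (I \ {i, j}) j = positionSign R (I.erase i) j := by
    rw [positionSign, positionSign]
    congr 2
    grind
  rw [crossingNumber_insert hlt, pow_add, hF.neg_one_pow_card_filter_eq_positionSign (by simp),
    prod_insert fun h ↦ (hlt _ h).false, sign_eq]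
  ring

lemma pfaffian_eq_sum_erase (x : Fin n → Fin n → R) (hi : i ∈ I) (hmin : ∀ k ∈ I, i ≤ k) :
    pfaffian x I = ∑ j ∈ I.erase i,
      positionSign R (I.erase i) j * (x i j * pfaffian x (I \ {i, j})) := by
  classical
  have hlt : ∀ j ∈ I.erase i, i < j := fun j hj ↦
    (hmin j (mem_of_mem_erase hj)).lt_of_ne (ne_of_mem_erase hj).symm
  have hnot {j k : Fin n} {F} (hF : IsOneFactorOn (I \ {i, j}) F) : (i, k) ∉ F := fun h ↦ by
    simpa using hF.fst_mem _ h
  simp only [pfaffian, mul_sum, sum_sigma']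
  symm
  refine sum_bij (fun z _ ↦ insert (i, z.1) z.2) ?_ ?_ ?_ ?_
  · rintro ⟨j, F⟩ hz
    simp only [mem_sigma, mem_filter_univ] at hz ⊢
    exact (isOneFactorOn_insert hi (mem_of_mem_erase hz.1) (hlt j hz.1) (hnot hz.2)).2 hz.2
  · rintro ⟨j, F⟩ hz ⟨k, F'⟩ hz' heq
    simp only [mem_sigma, mem_filter_univ] at hz hz' heq
    have hjk : j = k := by
      have hmem : (i, j) ∈ insert (i, k) F' := heq ▸ mem_insert_self _ _
      simpa [hnot hz'.2] using hmem
    subst hjk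
    rw [← erase_insert (hnot hz.2), heq, erase_insert (hnot hz'.2)]
  · intro F hF
    simp only [mem_filter_univ] at hF
    obtain ⟨j, hj⟩ := hF.exists_mk_mem hi hmin
    have hjI : j ∈ I.erase i := mem_erase.2 ⟨(hF.fst_lt_snd _ hj).ne', hF.snd_mem _ hj⟩
    refine ⟨⟨j, F.erase (i, j)⟩, ?_, insert_erase hj⟩
    simp only [mem_sigma, mem_filter_univ]
    refine ⟨hjI, (isOneFactorOn_insert hi (hF.snd_mem _ hj) (hlt j hjI) (notMem_erase _ _)).1 ?_⟩
    rwa [insert_erase hj]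
  · rintro ⟨j, F⟩ hz
    simp only [mem_sigma, mem_filter_univ] at hz
    exact (pfaffian_term_insert hmin hz.2).symm

end Pfaffian

lemma pmCount_eq_one {α : Type*} {G : SimpleGraph α} {s : Finset α}
    (h : ∃! m, IsPMOn G s m) : pmCount G s = 1 := by
  obtain ⟨m, hm, huniq⟩ := h
  exact Nat.card_eq_one_iff_unique.2
    ⟨⟨fun x y ↦ Subtype.ext ((huniq _ x.2).trans (huniq _ y.2).symm)⟩, ⟨m, hm⟩⟩

section Main

variable {α : Type*} [Fintype α] [DecidableEq α] {R : Type*} [CommRing R]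

lemma pmSum_empty_pow_mul_pmSum {G : SimpleGraph α} (w : Sym2 α → R) {n : ℕ} {a : Fin n → α}
    (ha : Function.Injective a) (hnc : NoncrossingList G (List.ofFn a)) {k : ℕ}
    {I : Finset (Fin n)} (hI : #I = 2 * k) :
    pmSum G w (coreWith a ∅) ^ k * pmSum G w (coreWith a I) =
      pmSum G w (coreWith a ∅) * pfaffian (fun i j ↦ pmSum G w (coreWith a {i, j})) I := by
  induction k generalizing I with
  | zero =>
    obtain rfl : I = ∅ := card_eq_zero.1 hI
    rw [pow_zero, one_mul, pfaffian_empty, mul_one]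
  | succ k ih =>
    have hne : I.Nonempty := card_pos.1 (by omega)
    have hi := I.min'_mem hne
    have hmin : ∀ j ∈ I, I.min' hne ≤ j := fun j hj ↦ I.min'_le j hj
    generalize I.min' hne = i at hi hmin
    have hcard : ∀ j ∈ I.erase i, #(I \ {i, j}) = 2 * k := fun j hj ↦ by
      have hsub : {i, j} ⊆ I := insert_subset hi (singleton_subset_iff.2 (mem_of_mem_erase hj))
      rw [card_sdiff_of_subset hsub, card_pair (ne_of_mem_erase hj).symm, hI]
      omega
    rw [pow_succ, mul_assoc, pmSum_empty_mul_pmSum ha hi w hnc hmin,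
      pfaffian_eq_sum_erase _ hi hmin, mul_sum, mul_sum]
    refine sum_congr rfl fun j hj ↦ ?_
    linear_combination positionSign R (I.erase i) j * pmSum G w (coreWith a {i, j}) *
      ih (hcard j hj)

lemma pmSum_one (G : SimpleGraph α) (s : Finset α) :
    pmSum G (1 : Sym2 α → R) s = (pmCount G s : R) := by
  classical
  simp [pmSum, pmCount, Nat.card_eq_fintype_card, Fintype.card_subtype]

end Main

open Classical in
/-- One factor stays on the right since the exponent `n / 2 - 1` would be truncated at `n = 0`. -/
theorem pfaffian_condensation_M_G_general {α R : Type*} [Fintype α] [DecidableEq α] [CommRing R]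
    (G : SimpleGraph α) (w : Sym2 α → R) (n : ℕ) (hn : Even n)
    (a : Fin n → α) (hdist : (List.ofFn a).Nodup) (hnc : NoncrossingList G (List.ofFn a)) :
    pmSum G w (univ \ univ.image a) ^ (n / 2) * pmSum G w univ =
      pmSum G w (univ \ univ.image a) *
        ∑ F with IsOneFactor n F, (-1) ^ crossingNumber n F *
          ∏ p ∈ F, pmSum G w (univ \ univ.image a ∪ {a p.1, a p.2}) := by
  have ha : Function.Injective a := List.nodup_ofFn.1 hdist
  have hcard : #(univ : Finset (Fin n)) = 2 * (n / 2) := by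
    rw [card_fin, Nat.two_mul_div_two_of_even hn]
  have hmain := pmSum_empty_pow_mul_pmSum w ha hnc hcard
  rw [coreWith_univ] at hmain
  simpa only [pfaffian, isOneFactorOn_univ, coreWith, image_empty, union_empty, image_insert,
    image_singleton] using hmain

open Classical in
/-- (Corollary 3.8.) Pfaffian condensation with `H = G − A`. -/
theorem pfaffian_condensation_M_G {α : Type*} [Fintype α] [DecidableEq α]
    (G : SimpleGraph α) (n : ℕ) (hn : Even n)
    (a : Fin n → α) (hdist : (List.ofFn a).Nodup)
    (hnc : NoncrossingList G (List.ofFn a))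
    (huniq : ∃! m : Finset (Sym2 α), IsPMOn G (Finset.univ \ Finset.univ.image a) m) :
    (pmCount G Finset.univ : ℤ) =
      ∑ F ∈ Finset.univ.filter (fun F : Finset (Fin n × Fin n) => IsOneFactor n F),
        (-1 : ℤ) ^ crossingNumber n F *
          ∏ p ∈ F,
            (pmCount G ((Finset.univ \ Finset.univ.image a) ∪ {a p.1, a p.2}) : ℤ) := by
  have hH : pmCount G (univ \ univ.image a) = 1 := pmCount_eq_one huniq
  simpa [pmSum_one, hH] using pfaffian_condensation_M_G_general G (1 : Sym2 α → ℤ) n hn a hdist hnc
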